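/- Let ν ∈ ℂ \ (−ℕ₀), μ ∈ ℂ, k ∈ ℕ₀ with ν + k ∉ −ℕ₀, μ + k + 1 ∉ −ℕ₀, and let ρ ∈ ℝ with 0 < ρ < 1. Then ₂F₁(ν+k, ν−μ; μ+k+1; ρ²) = ( Γ(μ+k+1) e^{iπ(μ−ν+1/2)} ) / ( √π Γ(ν+k) ρ^{μ+k+1/2} (1−ρ²)^{ν−μ−1/2} ) · Q_{k+μ−1/2}^{ν−μ−1/2}((1+ρ²)/(2ρ)). -/

import Mathlib

open Complex

/-- Pochhammer symbol (rising factorial) `(a)_k = a (a+1) ⋯ (a+k-1)`. -/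
noncomputable def poch (a : ℂ) (k : ℕ) : ℂ := ∏ i ∈ Finset.range k, (a + (i : ℂ))

/-- Gauss hypergeometric function `₂F₁(a,b;c;w)` as a series. -/
noncomputable def hyp2F1 (a b c w : ℂ) : ℂ :=
  ∑' k : ℕ, poch a k * poch b k / (poch c k * (Nat.factorial k : ℂ)) * w ^ k

/-- Terminating generalized hypergeometric function `₃F₂(-m,a₂,a₃;b₁,b₂;1)`. -/
noncomputable def hyp3F2 (m : ℕ) (a2 a3 b1 b2 : ℂ) : ℂ :=
  ∑ j ∈ Finset.range (m + 1),
    poch (-(m : ℂ)) j * poch a2 j * poch a3 j /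
      (poch b1 j * poch b2 j * (Nat.factorial j : ℂ))

/-- Gegenbauer polynomial `C_n^μ(x)`. -/
noncomputable def gegenbauerC (n : ℕ) (μ : ℂ) (x : ℂ) : ℂ :=
  poch (2 * μ) n / (Nat.factorial n : ℂ) *
    ∑ j ∈ Finset.range (n + 1),
      poch (-(n : ℂ)) j * poch ((n : ℂ) + 2 * μ) j /
          (poch (μ + 1 / 2) j * (Nat.factorial j : ℂ)) * ((1 - x) / 2) ^ j

/-- Associated Legendre function of the second kind `Q_ν^μ(z)` (principal branches). -/
noncomputable def legendreQ (ν μ z : ℂ) : ℂ :=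
  (Real.sqrt Real.pi : ℂ) * Complex.exp (Real.pi * I * μ) * Complex.Gamma (ν + μ + 1) *
      (z ^ 2 - 1) ^ (μ / 2) /
      ((2 : ℂ) ^ (ν + 1) * Complex.Gamma (ν + 3 / 2) * z ^ (ν + μ + 1)) *
    hyp2F1 ((ν + μ + 2) / 2) ((ν + μ + 1) / 2) (ν + 3 / 2) (1 / z ^ 2)

/-- Legendre polynomial `P_n(x)`. -/
noncomputable def legendrePoly (n : ℕ) (x : ℂ) : ℂ :=
  ∑ j ∈ Finset.range (n + 1),
    poch (-(n : ℂ)) j * poch ((n : ℂ) + 1) j / (poch 1 j * (Nat.factorial j : ℂ)) *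
      ((1 - x) / 2) ^ j

/-- Chebyshev polynomial of the second kind `U_n(x)`. -/
noncomputable def chebyshevU (n : ℕ) (x : ℂ) : ℂ :=
  ((n : ℂ) + 1) *
    ∑ j ∈ Finset.range (n + 1),
      poch (-(n : ℂ)) j * poch ((n : ℂ) + 2) j / (poch (3 / 2) j * (Nat.factorial j : ℂ)) *
        ((1 - x) / 2) ^ j



lemma poch_zero (a : ℂ) : poch a 0 = 1 := by simp [poch]

lemma poch_succ (a : ℂ) (n : ℕ) : poch a (n + 1) = poch a n * (a + n) := by
  simp [poch, Finset.prod_range_succ]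

lemma poch_succ' (a : ℂ) (n : ℕ) : poch a (n + 1) = a * poch (a + 1) n := by
  simp only [poch, Finset.prod_range_succ']
  rw [mul_comm]
  congr 1
  · simp
  · refine Finset.prod_congr rfl fun i _ => ?_
    push_cast; ring

lemma poch_add (a : ℂ) (n m : ℕ) : poch a (n + m) = poch a n * poch (a + n) m := by
  simp only [poch, Finset.prod_range_add]
  congr 1
  refine Finset.prod_congr rfl fun i _ => ?_
  push_cast; ring

lemma poch_two_mul (a : ℂ) (n : ℕ) :
    poch a (2 * n) = 4 ^ n * (poch (a / 2) n * poch ((a + 1) / 2) n) := by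
  induction n with
  | zero => simp [poch]
  | succ n ih =>
    rw [show 2 * (n + 1) = 2 * n + 1 + 1 by ring, poch_succ, poch_succ, ih, poch_succ, poch_succ]
    push_cast; ring

lemma poch_ne_zero {c : ℂ} (hc : ∀ m : ℕ, c ≠ -(m : ℂ)) (n : ℕ) : poch c n ≠ 0 := by
  rw [poch, Finset.prod_ne_zero_iff]
  intro i _ h
  exact hc i (eq_neg_of_add_eq_zero_left h)

lemma poch_reflect (b : ℂ) (n : ℕ) : poch (1 - b - n) n = (-1) ^ n * poch b n := by
  rw [poch, ← Finset.prod_range_reflect, poch]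
  have : ((-1 : ℂ)) ^ n = ∏ i ∈ Finset.range n, (-1 : ℂ) := by simp
  rw [this, ← Finset.prod_mul_distrib]
  refine Finset.prod_congr rfl fun i hi => ?_
  have hi' : i + 1 ≤ n := Finset.mem_range.mp hi
  rw [show n - 1 - i = n - (i + 1) by omega, Nat.cast_sub hi']
  push_cast; ring

lemma poch_eq_eval (a : ℂ) (n : ℕ) : poch a n = (ascPochhammer ℂ n).eval a := by
  induction n with
  | zero => simp [poch]
  | succ n ih => rw [poch_succ, ih, ascPochhammer_succ_eval]

/-- Chu-Vandermonde, division free. -/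
lemma chu (N : ℕ) : ∀ A c : ℂ,
    ∑ i ∈ Finset.range (N + 1), (N.choose i : ℂ) * ((-1) ^ i * poch A i * poch (c + i) (N - i))
      = poch (c - A) N := by
  induction N with
  | zero => intro A c; simp [poch]
  | succ N ih =>
    intro A c
    have h := Finset.sum_choose_succ_mul
      (fun i j => (-1 : ℂ) ^ i * poch A i * poch (c + i) j) N
    rw [show N + 1 + 1 = N + 2 from rfl, h]
    have h1 : ∑ i ∈ Finset.range (N + 1), (N.choose i : ℂ) *
        ((-1 : ℂ) ^ i * poch A i * poch (c + i) (N + 1 - i)) = (c + N) * poch (c - A) N := by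
      rw [← ih A c, Finset.mul_sum]
      refine Finset.sum_congr rfl fun i hi => ?_
      have hi' : i ≤ N := Nat.lt_succ_iff.mp (Finset.mem_range.mp hi)
      rw [show N + 1 - i = N - i + 1 by omega, poch_succ, Nat.cast_sub hi']
      ring
    have h2 : ∑ i ∈ Finset.range (N + 1), (N.choose i : ℂ) *
        ((-1 : ℂ) ^ (i + 1) * poch A (i + 1) * poch (c + (i + 1 : ℕ)) (N - i))
          = - A * poch (c - A) N := by
      rw [show c - A = (c + 1) - (A + 1) by ring, ← ih (A + 1) (c + 1), Finset.mul_sum]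
      refine Finset.sum_congr rfl fun i hi => ?_
      rw [poch_succ', pow_succ, show c + ((i + 1 : ℕ) : ℂ) = c + 1 + i by push_cast; ring]
      ring
    rw [h1, h2, poch_succ]
    ring

lemma coef_id (a b : ℂ) (hc : ∀ m : ℕ, a - b + 1 ≠ -(m : ℂ)) (N : ℕ) :
    ∑ n ∈ Finset.range (N + 1), poch a (2 * n) / (poch (a - b + 1) n * (n.factorial : ℂ)) *
      (poch (a + 2 * n) (N - n) / ((N - n).factorial : ℂ) * (-1) ^ (N - n))
      = poch a N * poch b N / (poch (a - b + 1) N * (N.factorial : ℂ)) := by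
  set c := a - b + 1 with hcdef
  have hN : (N.factorial : ℂ) ≠ 0 := by exact_mod_cast N.factorial_ne_zero
  have hcN := poch_ne_zero hc N
  have h := chu N (a + N) c
  rw [show c - (a + N) = 1 - b - N by rw [hcdef]; ring, poch_reflect] at h
  have key : poch b N = (-1) ^ N * ∑ i ∈ Finset.range (N + 1),
      (N.choose i : ℂ) * ((-1) ^ i * poch (a + N) i * poch (c + i) (N - i)) := by
    rw [h, ← mul_assoc, ← mul_pow]; simp
  rw [eq_div_iff (mul_ne_zero hcN hN), key, Finset.mul_sum, Finset.mul_sum, Finset.sum_mul]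
  refine Finset.sum_congr rfl fun n hn => ?_
  have hn' : n ≤ N := Nat.lt_succ_iff.mp (Finset.mem_range.mp hn)
  have e1 : poch a (2 * n) * poch (a + 2 * n) (N - n) = poch a N * poch (a + N) n := by
    rw [← poch_add a N n, show N + n = 2 * n + (N - n) by omega, poch_add]
    push_cast; rfl
  have e2 : poch c N = poch c n * poch (c + n) (N - n) := by
    rw [← poch_add, Nat.add_sub_cancel' hn']
  have e3 : (N.factorial : ℂ) = N.choose n * n.factorial * (N - n).factorial := by
    exact_mod_cast (Nat.choose_mul_factorial_mul_factorial hn').symm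
  have e4 : (-1 : ℂ) ^ (N - n) = (-1) ^ N * (-1) ^ n := by
    obtain ⟨k, rfl⟩ := Nat.exists_eq_add_of_le hn'
    rw [Nat.add_sub_cancel_left, pow_add, mul_right_comm, ← mul_pow]; simp
  have f1 : (n.factorial : ℂ) ≠ 0 := by exact_mod_cast n.factorial_ne_zero
  have f2 : ((N - n).factorial : ℂ) ≠ 0 := by exact_mod_cast (N - n).factorial_ne_zero
  have f3 := poch_ne_zero hc n
  rw [e2, e3, e4]
  field_simp
  linear_combination ((N.choose n : ℂ) * poch (c + n) (N - n)) * e1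

lemma hyp_fps (a b c : ℂ) (hc : ∀ m : ℕ, c ≠ -(m : ℂ)) :
    HasFPowerSeriesOnBall (hyp2F1 a b c) (ordinaryHypergeometricSeries ℂ a b c) 0 1 := by
  have hr : 1 ≤ (ordinaryHypergeometricSeries ℂ a b c).radius := by
    by_cases h1 : ∃ k : ℕ, a = -(k : ℂ)
    · obtain ⟨k, rfl⟩ := h1
      rw [ordinaryHypergeometric_radius_top_of_neg_nat₁]; exact le_top
    by_cases h2 : ∃ k : ℕ, b = -(k : ℂ)
    · obtain ⟨k, rfl⟩ := h2
      rw [ordinaryHypergeometric_radius_top_of_neg_nat₂]; exact le_top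
    push Not at h1 h2
    refine (ordinaryHypergeometricSeries_radius_eq_one ℂ a b c fun k => ⟨?_, ?_, ?_⟩).ge
    · intro h; exact h1 k (by rw [h]; ring)
    · intro h; exact h2 k (by rw [h]; ring)
    · intro h; exact hc k (by rw [h]; ring)
  have := (FormalMultilinearSeries.hasFPowerSeriesOnBall _ (lt_of_lt_of_le one_pos hr)).mono
    one_pos hr
  convert this using 1
  funext x
  rw [ordinaryHypergeometric_sum_eq, hyp2F1]
  refine tsum_congr fun n => ?_
  rw [poch_eq_eval, poch_eq_eval, poch_eq_eval, smul_eq_mul, div_eq_mul_inv, mul_inv]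
  ring

lemma hyp_summable (a b c : ℂ) (hc : ∀ m : ℕ, c ≠ -(m : ℂ)) (x : ℂ) (hx : ‖x‖ < 1) :
    Summable fun n : ℕ => poch a n * poch b n / (poch c n * (n.factorial : ℂ)) * x ^ n := by
  have h := (hyp_fps a b c hc).hasSum (y := x) (by
    simpa [← ofReal_norm] using hx)
  refine h.summable.congr fun n => ?_
  rw [ordinaryHypergeometricSeries_apply_eq]
  rw [poch_eq_eval, poch_eq_eval, poch_eq_eval, smul_eq_mul, div_eq_mul_inv, mul_inv]
  ring

lemma binom (s x : ℂ) (hx : ‖x‖ < 1) :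
    HasSum (fun m : ℕ => poch s m / (m.factorial : ℂ) * x ^ m) (1 / (1 - x) ^ s) := by
  have h := (Complex.one_div_one_sub_cpow_hasFPowerSeriesOnBall_zero s).hasSum (y := x) (by
    simpa [← ofReal_norm] using hx)
  simp only [zero_add] at h
  convert! h using 1
  funext m
  rw [FormalMultilinearSeries.ofScalars_apply_eq, smul_eq_mul, ← Ring.multichoose_eq]
  congr 1
  have := Ring.factorial_nsmul_multichoose_eq_ascPochhammer s m
  rw [Polynomial.ascPochhammer_smeval_eq_eval, ← poch_eq_eval, nsmul_eq_mul] at this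
  rw [← this]
  have f1 : (m.factorial : ℂ) ≠ 0 := by exact_mod_cast m.factorial_ne_zero
  field_simp

lemma binom_real (s x : ℝ) (hx0 : 0 ≤ x) (hx : x < 1) :
    HasSum (fun m : ℕ => (∏ i ∈ Finset.range m, (s + i)) / (m.factorial : ℝ) * x ^ m)
      (1 / (1 - x) ^ s) := by
  have h := binom s x (by simpa [abs_of_nonneg hx0] using hx)
  rw [← Complex.hasSum_ofReal]
  convert h using 1
  · funext m; simp [poch]
  · rw [Complex.ofReal_div, Complex.ofReal_cpow (by linarith)]; simp

lemma norm_poch_le (a : ℂ) (s : ℝ) (h : ‖a‖ ≤ s) (m : ℕ) :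
    ‖poch a m‖ ≤ ∏ i ∈ Finset.range m, (s + i) := by
  rw [poch, norm_prod]
  refine Finset.prod_le_prod (fun _ _ => norm_nonneg _) fun i _ => ?_
  refine (norm_add_le _ _).trans ?_
  simpa using h

lemma quad_small (a b : ℂ) (hc : ∀ m : ℕ, a - b + 1 ≠ -(m : ℂ)) (w : ℝ) (hw0 : 0 < w)
    (hw1 : w < 1 / 10) :
    hyp2F1 a b (a - b + 1) (w : ℂ) = 1 / (1 + (w : ℂ)) ^ a *
      hyp2F1 (a / 2) ((a + 1) / 2) (a - b + 1) (4 * (w : ℂ) / (1 + (w : ℂ)) ^ 2) := by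
  set c := a - b + 1 with hcdef
  let d : ℕ → ℂ := fun n => poch (a / 2) n * poch ((a + 1) / 2) n / (poch c n * (n.factorial : ℂ))
  let f : ℕ × ℕ → ℂ := fun p => d p.1 * 4 ^ p.1 * (w : ℂ) ^ p.1 *
    (poch (a + 2 * p.1) p.2 / (p.2.factorial : ℂ) * (-(w : ℂ)) ^ p.2)
  let g : ℕ × ℕ → ℝ := fun p => ‖d p.1‖ * 4 ^ p.1 * w ^ p.1 *
    ((∏ i ∈ Finset.range p.2, ((‖a‖ + 2 * p.1) + i)) / (p.2.factorial : ℝ) * w ^ p.2)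
  have hg0 : 0 ≤ g := fun p => by
    have : 0 ≤ ∏ i ∈ Finset.range p.2, ((‖a‖ + 2 * p.1) + (i : ℝ)) :=
      Finset.prod_nonneg fun i _ => by positivity
    simp only [g, Pi.zero_apply]; positivity
  have hgs : ∀ n : ℕ, HasSum (fun m => g (n, m))
      (‖d n‖ * 4 ^ n * w ^ n * (1 / (1 - w) ^ (‖a‖ + 2 * n))) := fun n =>
    (binom_real (‖a‖ + 2 * n) w hw0.le (by linarith)).mul_left _
  have h1w : 0 < 1 - w := by linarith
  have hg : Summable g := by
    rw [summable_prod_of_nonneg hg0]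
    refine ⟨fun n => (hgs n).summable, ?_⟩
    have hy : ‖((4 * w / (1 - w) ^ 2 : ℝ) : ℂ)‖ < 1 := by
      rw [Complex.norm_real, Real.norm_of_nonneg (by positivity), div_lt_one (by positivity)]
      nlinarith
    have := ((hyp_summable (a / 2) ((a + 1) / 2) c hc _ hy).norm).mul_left (1 / (1 - w) ^ ‖a‖)
    refine this.congr fun n => ?_
    rw [(hgs n).tsum_eq, norm_mul, norm_pow, Complex.norm_real,
      Real.norm_of_nonneg (by positivity), Real.rpow_add h1w]
    have : (1 - w) ^ (2 * (n : ℝ)) = ((1 - w) ^ 2) ^ n := by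
      rw [← pow_mul, ← Real.rpow_natCast]; push_cast; rfl
    rw [this, div_pow, mul_pow]
    have := (Real.rpow_pos_of_pos h1w ‖a‖).ne'
    simp only [d]
    field_simp
  have hf : Summable f := by
    refine Summable.of_norm_bounded hg fun p => ?_
    simp only [f, g, norm_mul, norm_pow, norm_div, norm_neg, Complex.norm_real, Complex.norm_natCast,
      Real.norm_of_nonneg hw0.le, Complex.norm_ofNat]
    gcongr
    refine norm_poch_le _ _ ?_ _
    refine (norm_add_le _ _).trans ?_
    simp
  have hw1' : (1 + (w : ℂ)) ≠ 0 := by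
    have : (1 + w : ℝ) ≠ 0 := by positivity
    exact_mod_cast this
  -- sum by rows
  have hrow : ∑' p, f p = 1 / (1 + (w : ℂ)) ^ a *
      hyp2F1 (a / 2) ((a + 1) / 2) c (4 * (w : ℂ) / (1 + (w : ℂ)) ^ 2) := by
    rw [hf.tsum_prod, hyp2F1, ← tsum_mul_left]
    refine tsum_congr fun n => ?_
    have hb := (binom (a + 2 * n) (-(w : ℂ)) (by
      rw [norm_neg, Complex.norm_real, Real.norm_of_nonneg hw0.le]; linarith)).mul_left
        (d n * 4 ^ n * (w : ℂ) ^ n)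
    rw [show ∑' m, f (n, m) = _ from hb.tsum_eq, sub_neg_eq_add, Complex.cpow_add _ _ hw1']
    have : (1 + (w : ℂ)) ^ (2 * (n : ℂ)) = ((1 + (w : ℂ)) ^ 2) ^ n := by
      rw [← pow_mul, ← Complex.cpow_natCast]; push_cast; rfl
    rw [this, div_pow, mul_pow]
    have : (1 + (w : ℂ)) ^ a ≠ 0 := by simp [Complex.cpow_eq_zero_iff, hw1']
    simp only [d]
    field_simp
  -- sum by diagonals
  have hdiag : ∑' p, f p = hyp2F1 a b c (w : ℂ) := by
    have hf' := (Finset.HasAntidiagonal.sigmaAntidiagonalEquivProd (A := ℕ)).summable_iff.mpr hf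
    rw [← (Finset.HasAntidiagonal.sigmaAntidiagonalEquivProd (A := ℕ)).tsum_eq f]
    refine (hf'.tsum_sigma' (fun n => (hasSum_fintype _).summable)).trans ?_
    rw [hyp2F1]
    refine tsum_congr fun N => ?_
    rw [tsum_fintype]
    have : ∑ x : Finset.HasAntidiagonal.antidiagonal N,
        f (Finset.HasAntidiagonal.sigmaAntidiagonalEquivProd (A := ℕ) ⟨N, x⟩)
        = ∑ p ∈ Finset.HasAntidiagonal.antidiagonal N, f p :=
      Finset.sum_coe_sort (Finset.HasAntidiagonal.antidiagonal N) f
    refine this.trans ?_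
    rw [Finset.Nat.sum_antidiagonal_eq_sum_range_succ_mk, ← coef_id a b hc N, Finset.sum_mul]
    refine Finset.sum_congr rfl fun n hn => ?_
    have hn' : n ≤ N := Nat.lt_succ_iff.mp (Finset.mem_range.mp hn)
    have e : (w : ℂ) ^ N = (w : ℂ) ^ n * (w : ℂ) ^ (N - n) := by
      rw [← pow_add, Nat.add_sub_cancel' hn']
    simp only [f, d]
    rw [e, poch_two_mul, neg_pow (w : ℂ)]
    ring
  rw [← hdiag, hrow]

lemma hyp_analytic (a b c : ℂ) (hc : ∀ m : ℕ, c ≠ -(m : ℂ)) (x : ℂ) (hx : ‖x‖ < 1) :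
    AnalyticAt ℂ (hyp2F1 a b c) x :=
  (hyp_fps a b c hc).analyticAt_of_mem (by simpa [← ofReal_norm] using hx)

lemma quad (a b : ℂ) (hc : ∀ m : ℕ, a - b + 1 ≠ -(m : ℂ)) (w : ℝ) (hw0 : 0 < w)
    (hw1 : w < 1) :
    hyp2F1 a b (a - b + 1) (w : ℂ) = 1 / (1 + (w : ℂ)) ^ a *
      hyp2F1 (a / 2) ((a + 1) / 2) (a - b + 1) (4 * (w : ℂ) / (1 + (w : ℂ)) ^ 2) := by
  have hof : ∀ x : ℝ, AnalyticAt ℝ (fun x : ℝ => (x : ℂ)) x := fun x =>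
    Complex.ofRealCLM.analyticAt x
  have hF : AnalyticOnNhd ℝ (fun x : ℝ => hyp2F1 a b (a - b + 1) (x : ℂ)) (Set.Ioo 0 1) := by
    intro x hx
    have h := (hyp_analytic a b _ hc (x : ℂ) (by
      rw [Complex.norm_real, Real.norm_of_nonneg hx.1.le]; exact hx.2)).restrictScalars (𝕜 := ℝ)
    exact h.comp (hof x)
  have hG : AnalyticOnNhd ℝ (fun x : ℝ => 1 / (1 + (x : ℂ)) ^ a *
      hyp2F1 (a / 2) ((a + 1) / 2) (a - b + 1) (4 * (x : ℂ) / (1 + (x : ℂ)) ^ 2))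
      (Set.Ioo 0 1) := by
    intro x hx
    have hx0 := hx.1
    have hx1 := hx.2
    have hne : (1 + (x : ℂ)) ≠ 0 := by
      have : (1 + x : ℝ) ≠ 0 := by positivity
      exact_mod_cast this
    have hn : ‖4 * (x : ℂ) / (1 + (x : ℂ)) ^ 2‖ < 1 := by
      have : 4 * (x : ℂ) / (1 + (x : ℂ)) ^ 2 = ((4 * x / (1 + x) ^ 2 : ℝ) : ℂ) := by push_cast; rfl
      rw [this, Complex.norm_real, Real.norm_of_nonneg (by positivity),
        div_lt_one (by positivity)]
      nlinarith [sq_pos_of_pos (sub_pos.mpr hx1)]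
    have hsl : 1 + (x : ℂ) ∈ Complex.slitPlane := by
      left; simp; linarith
    have h : AnalyticAt ℂ (fun z : ℂ => 1 / (1 + z) ^ a *
      hyp2F1 (a / 2) ((a + 1) / 2) (a - b + 1) (4 * z / (1 + z) ^ 2)) (x : ℂ) := by
      refine AnalyticAt.mul ?_ ?_
      · refine AnalyticAt.div analyticAt_const ?_ (by simp [Complex.cpow_eq_zero_iff, hne])
        exact (analyticAt_const.add analyticAt_id).cpow analyticAt_const hsl
      · have hi : AnalyticAt ℂ (fun z : ℂ => 4 * z / (1 + z) ^ 2) (x : ℂ) := by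
          refine AnalyticAt.div (analyticAt_const.mul analyticAt_id)
            ((analyticAt_const.add analyticAt_id).pow 2) (pow_ne_zero 2 hne)
        exact AnalyticAt.fun_comp (hyp_analytic _ _ _ hc _ hn) hi
    exact (h.restrictScalars (𝕜 := ℝ)).comp (hof x)
  have heq := hF.eqOn_of_preconnected_of_eventuallyEq hG isPreconnected_Ioo
    (z₀ := 1 / 20) (by constructor <;> norm_num) (by
      filter_upwards [Ioo_mem_nhds (show (0 : ℝ) < 1 / 20 by norm_num)
        (show (1 / 20 : ℝ) < 1 / 10 by norm_num)] with x hx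
      exact quad_small a b hc x hx.1 hx.2)
  exact heq ⟨hw0, hw1⟩

lemma div_two_mul_cpow (x ρ : ℝ) (hx : 0 < x) (hρ : 0 < ρ) (s : ℂ) :
    ((x : ℂ) / (2 * (ρ : ℂ))) ^ s = (x : ℂ) ^ s / ((2 : ℂ) ^ s * (ρ : ℂ) ^ s) := by
  have h2 := Complex.mul_cpow_ofReal_nonneg (a := 2) (b := ρ) (by norm_num) hρ.le s
  have h1 := Complex.mul_cpow_ofReal_nonneg (a := x / (2 * ρ)) (b := 2 * ρ)
    (by positivity) (by positivity) s
  have hρc : (ρ : ℂ) ≠ 0 := by exact_mod_cast hρ.ne'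
  push_cast at h1 h2
  rw [div_mul_cancel₀ _ (by simp [hρc]), h2] at h1
  rw [h1, mul_div_cancel_right₀]
  simp [Complex.cpow_eq_zero_iff, hρc]

/-- evaluation of the Gauss hypergeometric coefficient in terms of the
associated Legendre function of the second kind. -/
theorem hyp2F1_eq_legendreQ
    (ν : ℂ) (hν : ∀ m : ℕ, ν ≠ -(m : ℂ))
    (μ : ℂ) (k : ℕ)
    (hνk : ∀ m : ℕ, ν + (k : ℂ) ≠ -(m : ℂ))
    (hμk : ∀ m : ℕ, μ + (k : ℂ) + 1 ≠ -(m : ℂ))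
    (ρ : ℝ) (hρ0 : 0 < ρ) (hρ1 : ρ < 1) :
    hyp2F1 (ν + (k : ℂ)) (ν - μ) (μ + (k : ℂ) + 1) ((ρ : ℂ) ^ 2) =
      Complex.Gamma (μ + (k : ℂ) + 1) * Complex.exp (Real.pi * I * (μ - ν + 1 / 2)) /
          ((Real.sqrt Real.pi : ℂ) * Complex.Gamma (ν + (k : ℂ)) *
            (ρ : ℂ) ^ (μ + (k : ℂ) + 1 / 2) * (1 - (ρ : ℂ) ^ 2) ^ (ν - μ - 1 / 2)) *
        legendreQ ((k : ℂ) + μ - 1 / 2) (ν - μ - 1 / 2) ((1 + (ρ : ℂ) ^ 2) / (2 * (ρ : ℂ))) := by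
  set a : ℂ := ν + (k : ℂ) with ha
  set b : ℂ := ν - μ with hb
  have hcab : μ + (k : ℂ) + 1 = a - b + 1 := by rw [ha, hb]; ring
  have hΓa : Complex.Gamma a ≠ 0 := Complex.Gamma_ne_zero hνk
  have hΓc : Complex.Gamma (μ + (k : ℂ) + 1) ≠ 0 := Complex.Gamma_ne_zero hμk
  have hq := quad a b (by rw [← hcab]; exact hμk) (ρ ^ 2) (by positivity) (by nlinarith)
  rw [← hcab] at hq
  push_cast at hq
  have hρ2 : ρ ^ 2 < 1 := by nlinarith
  have hρc : (ρ : ℂ) ≠ 0 := by exact_mod_cast hρ0.ne'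
  have h1p : (1 + (ρ : ℂ) ^ 2) ≠ 0 := by
    have : (1 + ρ ^ 2 : ℝ) ≠ 0 := by positivity
    exact_mod_cast this
  have h1m : (1 - (ρ : ℂ) ^ 2) ≠ 0 := by
    have : (1 - ρ ^ 2 : ℝ) ≠ 0 := by linarith
    exact_mod_cast this
  have hsp : (Real.sqrt Real.pi : ℂ) ≠ 0 := by
    have : Real.sqrt Real.pi ≠ 0 := (Real.sqrt_pos.mpr Real.pi_pos).ne'
    exact_mod_cast this
  rw [hq, legendreQ]
  rw [show (k : ℂ) + μ - 1 / 2 + (b - 1 / 2) + 2 = a + 1 by rw [ha, hb]; ring,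
    show (k : ℂ) + μ - 1 / 2 + (b - 1 / 2) + 1 = a by rw [ha, hb]; ring,
    show (k : ℂ) + μ - 1 / 2 + 3 / 2 = μ + k + 1 by ring,
    show (k : ℂ) + μ - 1 / 2 + 1 = μ + k + 1 / 2 by ring,
    show (1 : ℂ) / ((1 + (ρ : ℂ) ^ 2) / (2 * (ρ : ℂ))) ^ 2
      = 4 * (ρ : ℂ) ^ 2 / (1 + (ρ : ℂ) ^ 2) ^ 2 by field_simp; norm_num]
  have hsymm : hyp2F1 ((a + 1) / 2) (a / 2) (μ + k + 1) (4 * (ρ : ℂ) ^ 2 / (1 + (ρ : ℂ) ^ 2) ^ 2)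
      = hyp2F1 (a / 2) ((a + 1) / 2) (μ + k + 1) (4 * (ρ : ℂ) ^ 2 / (1 + (ρ : ℂ) ^ 2) ^ 2) := by
    simp only [hyp2F1]
    refine tsum_congr fun n => ?_
    ring
  rw [hsymm, ← mul_assoc]
  congr 1
  -- elementary identity of powers
  have hexp : Complex.exp (Real.pi * I * (μ - ν + 1 / 2)) * Complex.exp (Real.pi * I * (b - 1 / 2))
      = 1 := by
    rw [← Complex.exp_add, hb]
    ring_nf
    simp
  have hz2 : (((1 + (ρ : ℂ) ^ 2) / (2 * (ρ : ℂ))) ^ 2 - 1) ^ ((b - 1 / 2) / 2)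
      = (1 - (ρ : ℂ) ^ 2) ^ (b - 1 / 2) / ((2 : ℂ) ^ (b - 1 / 2) * (ρ : ℂ) ^ (b - 1 / 2)) := by
    have e1 : ((1 + (ρ : ℂ) ^ 2) / (2 * (ρ : ℂ))) ^ 2 - 1
        = ((((1 - ρ ^ 2) / (2 * ρ)) ^ (2 : ℕ) : ℝ) : ℂ) := by
      push_cast; field_simp; ring
    have hpos : 0 < (1 - ρ ^ 2) / (2 * ρ) := by
      have : 0 < 1 - ρ ^ 2 := by linarith
      positivity
    rw [e1, show (b - 1 / 2) / 2 = (((1 / 2 : ℝ) : ℂ)) * (b - 1 / 2) by push_cast; ring,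
      Complex.cpow_mul_ofReal_nonneg (by positivity)]
    rw [← Real.sqrt_eq_rpow, Real.sqrt_sq hpos.le]
    have h := div_two_mul_cpow (1 - ρ ^ 2) ρ (by linarith) hρ0 (b - 1 / 2)
    push_cast at h ⊢
    exact h
  have hz : ((1 + (ρ : ℂ) ^ 2) / (2 * (ρ : ℂ))) ^ a
      = (1 + (ρ : ℂ) ^ 2) ^ a / ((2 : ℂ) ^ a * (ρ : ℂ) ^ a) := by
    have h := div_two_mul_cpow (1 + ρ ^ 2) ρ (by positivity) hρ0 a
    push_cast at h
    exact h
  have h2 : (2 : ℂ) ^ (b - 1 / 2) * (2 : ℂ) ^ (μ + k + 1 / 2) = (2 : ℂ) ^ a := by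
    rw [← Complex.cpow_add _ _ two_ne_zero, ha, hb]; congr 1; ring
  have hr : (ρ : ℂ) ^ (b - 1 / 2) * (ρ : ℂ) ^ (μ + k + 1 / 2) = (ρ : ℂ) ^ a := by
    rw [← Complex.cpow_add _ _ hρc, ha, hb]; congr 1; ring
  rw [hz2, hz]
  have n1 : (1 + (ρ : ℂ) ^ 2) ^ a ≠ 0 := by simp [Complex.cpow_eq_zero_iff, h1p]
  have n2 : (1 - (ρ : ℂ) ^ 2) ^ (b - 1 / 2) ≠ 0 := by simp [Complex.cpow_eq_zero_iff, h1m]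
  have n3 : ∀ s : ℂ, (2 : ℂ) ^ s ≠ 0 := fun s => by simp [Complex.cpow_eq_zero_iff]
  have n4 : ∀ s : ℂ, (ρ : ℂ) ^ s ≠ 0 := fun s => by simp [Complex.cpow_eq_zero_iff, hρc]
  have n5 := n3 (b - 1 / 2)
  have n6 := n3 (μ + k + 1 / 2)
  have n7 := n4 (b - 1 / 2)
  have n8 := n4 (μ + k + 1 / 2)
  rw [← h2, ← hr]
  generalize (2 : ℂ) ^ (b - 1 / 2) = x1 at *
  generalize (2 : ℂ) ^ (μ + k + 1 / 2) = x2 at *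
  generalize (ρ : ℂ) ^ (b - 1 / 2) = x3 at *
  generalize (ρ : ℂ) ^ (μ + k + 1 / 2) = x4 at *
  generalize (1 + (ρ : ℂ) ^ 2) ^ a = x5 at *
  generalize (1 - (ρ : ℂ) ^ 2) ^ (b - 1 / 2) = x6 at *
  generalize Complex.exp (Real.pi * I * (μ - ν + 1 / 2)) = x7 at *
  generalize Complex.exp (Real.pi * I * (b - 1 / 2)) = x8 at *
  generalize Complex.Gamma a = x9 at *
  generalize Complex.Gamma (μ + k + 1) = x10 at *
  generalize (Real.sqrt Real.pi : ℂ) = x11 at *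
  field_simp
  rw [hexp]
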